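/- arXiv:quant-ph/0702007 — 12 statements merged into one kernel-verified Lean document; each statement's English description precedes it below -/
import Mathlib

section
/- (Rabi's formula.) For every real t, |c₁(t)|² = (γ²/Ω²)·sin²(Ω t); equivalently, the probability of finding the driven two-state system in its ground state at time t equals γ²/(γ² + (ω − ω₂₁)²/4) · sin²(Ω t). -/
open Complex Real

/-- Rabi's formula for the driven two-state system: for every real `t`,
`|c₁(t)|² = (γ²/Ω²)·sin²(Ω t) = γ²/(γ² + (ω − ω₂₁)²/4)·sin²(Ω t)`. -/
theorem rabi_formula
    (E₁ E₂ γ ω ω₂₁ Ω : ℝ)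
    (hω₂₁ : ω₂₁ = E₂ - E₁)
    (hΩ : Ω = Real.sqrt (γ ^ 2 + (ω - ω₂₁) ^ 2 / 4))
    (hΩpos : 0 < Ω)
    (c₁ c₂ : ℝ → ℂ)
    (hc₁ : Differentiable ℝ c₁) (hc₂ : Differentiable ℝ c₂)
    (heq₁ : ∀ t : ℝ, Complex.I * deriv c₁ t =
      (E₁ : ℂ) * c₁ t + (γ : ℂ) * Complex.exp (Complex.I * ω * t) * c₂ t)
    (heq₂ : ∀ t : ℝ, Complex.I * deriv c₂ t =
      (γ : ℂ) * Complex.exp (-(Complex.I * ω * t)) * c₁ t + (E₂ : ℂ) * c₂ t)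
    (hinit₁ : c₁ 0 = 0) (hinit₂ : c₂ 0 = 1) :
    ∀ t : ℝ,
      ‖c₁ t‖ ^ 2 = (γ ^ 2 / Ω ^ 2) * Real.sin (Ω * t) ^ 2 ∧
      ‖c₁ t‖ ^ 2 =
        (γ ^ 2 / (γ ^ 2 + (ω - ω₂₁) ^ 2 / 4)) * Real.sin (Ω * t) ^ 2 := by
  have hsq : Ω ^ 2 = γ ^ 2 + (ω - ω₂₁) ^ 2 / 4 := by
    rw [hΩ]; exact Real.sq_sqrt (by positivity)
  intro t
  rw [← hsq, and_self]
  obtain ⟨d, hd⟩ : ∃ d : ℝ, d = (ω₂₁ - ω) / 2 := ⟨_, rfl⟩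
  have hsq' : (Ω : ℂ) ^ 2 = γ ^ 2 + d ^ 2 := by
    have : Ω ^ 2 = γ ^ 2 + d ^ 2 := by rw [hsq, hd]; ring
    exact_mod_cast this
  have hω : ω = E₂ - E₁ - 2 * d := by rw [hd, hω₂₁]; ring
  have hΩ0 : (Ω : ℂ) ≠ 0 := by exact_mod_cast hΩpos.ne'
  have hd₁ : ∀ s, deriv c₁ s = -Complex.I * ((E₁ : ℂ) * c₁ s
      + (γ : ℂ) * Complex.exp (Complex.I * ω * s) * c₂ s) := by
    intro s
    rw [← heq₁ s]; linear_combination deriv c₁ s * Complex.I_sq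
  have hd₂ : ∀ s, deriv c₂ s = -Complex.I * ((γ : ℂ) * Complex.exp (-(Complex.I * ω * s)) * c₁ s
      + (E₂ : ℂ) * c₂ s) := by
    intro s
    rw [← heq₂ s]; linear_combination deriv c₂ s * Complex.I_sq
  have hexp : ∀ (p : ℂ) (s : ℝ), HasDerivAt (fun s : ℝ => Complex.exp (Complex.I * p * s))
      (Complex.I * p * Complex.exp (Complex.I * p * s)) s := by
    intro p s
    have h := ((hasDerivAt_id s).ofReal_comp.const_mul (Complex.I * p)).cexp
    refine h.congr_deriv ?_
    simp only [id, Complex.ofReal_one]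
    ring
  obtain ⟨b₁, hb₁⟩ : ∃ b : ℝ → ℂ, b = fun s : ℝ =>
    Complex.exp (Complex.I * ((E₁ : ℂ) + d) * s) * c₁ s := ⟨_, rfl⟩
  obtain ⟨b₂, hb₂⟩ : ∃ b : ℝ → ℂ, b = fun s : ℝ =>
    Complex.exp (Complex.I * ((E₂ : ℂ) - d) * s) * c₂ s := ⟨_, rfl⟩
  have hD₁ : ∀ s, HasDerivAt b₁ (Complex.I * d * b₁ s - Complex.I * γ * b₂ s) s := by
    intro s
    have h := (hexp ((E₁ : ℂ) + d) s).mul (hc₁ s).hasDerivAt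
    rw [hb₁, hb₂]
    refine h.congr_deriv ?_
    have he : Complex.exp (Complex.I * ((E₂ : ℂ) - d) * s)
        = Complex.exp (Complex.I * ((E₁ : ℂ) + d) * s) * Complex.exp (Complex.I * ω * s) := by
      rw [← Complex.exp_add, hω]; congr 1; push_cast; ring
    simp only [he, hd₁]
    ring
  have hD₂ : ∀ s, HasDerivAt b₂ (-Complex.I * γ * b₁ s - Complex.I * d * b₂ s) s := by
    intro s
    have h := (hexp ((E₂ : ℂ) - d) s).mul (hc₂ s).hasDerivAt
    rw [hb₁, hb₂]
    refine h.congr_deriv ?_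
    have he : Complex.exp (Complex.I * ((E₁ : ℂ) + d) * s)
        = Complex.exp (Complex.I * ((E₂ : ℂ) - d) * s) * Complex.exp (-(Complex.I * ω * s)) := by
      rw [← Complex.exp_add, hω]; congr 1; push_cast; ring
    simp only [he, hd₂]
    ring
  have hS : ∀ s : ℝ, HasDerivAt (fun s : ℝ => ((Real.sin (Ω * s) : ℝ) : ℂ))
      ((Real.cos (Ω * s) : ℝ) * (Ω : ℂ)) s := by
    intro s
    have h := ((hasDerivAt_id s).const_mul Ω).sin.ofReal_comp
    simpa using h
  have hC : ∀ s : ℝ, HasDerivAt (fun s : ℝ => ((Real.cos (Ω * s) : ℝ) : ℂ))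
      (-(Real.sin (Ω * s) : ℝ) * (Ω : ℂ)) s := by
    intro s
    have h := ((hasDerivAt_id s).const_mul Ω).cos.ofReal_comp
    simpa using h
  have hu : ∀ s : ℝ, HasDerivAt (fun s : ℝ => (Ω : ℂ) * (((Real.cos (Ω * s) : ℝ) : ℂ) * b₁ s)
      - ((Real.sin (Ω * s) : ℝ) : ℂ) * (Complex.I * d * b₁ s - Complex.I * γ * b₂ s)) 0 s := by
    intro s
    have h := (((hC s).mul (hD₁ s)).const_mul (Ω : ℂ)).sub
      ((hS s).mul (((hD₁ s).const_mul (Complex.I * d)).sub ((hD₂ s).const_mul (Complex.I * γ))))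
    refine h.congr_deriv ?_
    simp only [Pi.sub_apply]
    linear_combination (-((Real.sin (Ω * s) : ℝ) : ℂ) * b₁ s) * hsq'
      - ((Real.sin (Ω * s) : ℝ) : ℂ) * b₁ s * (γ ^ 2 + d ^ 2) * Complex.I_sq
  have hv : ∀ s : ℝ, HasDerivAt (fun s : ℝ => (Ω : ℂ) * (((Real.cos (Ω * s) : ℝ) : ℂ) * b₂ s)
      - ((Real.sin (Ω * s) : ℝ) : ℂ) * (-Complex.I * γ * b₁ s - Complex.I * d * b₂ s)) 0 s := by
    intro s
    have h := (((hC s).mul (hD₂ s)).const_mul (Ω : ℂ)).sub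
      ((hS s).mul (((hD₁ s).const_mul (-Complex.I * γ)).sub ((hD₂ s).const_mul (Complex.I * d))))
    refine h.congr_deriv ?_
    simp only [Pi.sub_apply]
    linear_combination (-((Real.sin (Ω * s) : ℝ) : ℂ) * b₂ s) * hsq'
      - ((Real.sin (Ω * s) : ℝ) : ℂ) * b₂ s * (γ ^ 2 + d ^ 2) * Complex.I_sq
  have hu0 := is_const_of_deriv_eq_zero (fun s => (hu s).differentiableAt)
    (fun s => (hu s).deriv) t 0
  have hv0 := is_const_of_deriv_eq_zero (fun s => (hv s).differentiableAt)
    (fun s => (hv s).deriv) t 0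
  have hb10 : b₁ 0 = 0 := by simp [hb₁, hinit₁]
  have hb20 : b₂ 0 = 1 := by simp [hb₂, hinit₂]
  simp only [hb10, hb20, mul_zero, Real.cos_zero, Real.sin_zero, Complex.ofReal_zero,
    Complex.ofReal_one, zero_mul, sub_zero, mul_one] at hu0 hv0
  have hcs : ((Real.sin (Ω * t) : ℝ) : ℂ) ^ 2 + ((Real.cos (Ω * t) : ℝ) : ℂ) ^ 2 = 1 := by
    exact_mod_cast Real.sin_sq_add_cos_sq (Ω * t)
  have key : (Ω : ℂ) * b₁ t = -Complex.I * γ * ((Real.sin (Ω * t) : ℝ) : ℂ) := by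
    generalize ((Real.sin (Ω * t) : ℝ) : ℂ) = S at *
    generalize ((Real.cos (Ω * t) : ℝ) : ℂ) = C at *
    apply mul_left_cancel₀ hΩ0
    linear_combination (Ω : ℂ) * C * hu0 + S * (Complex.I * d * hu0 - Complex.I * γ * hv0)
      + S ^ 2 * b₁ t * hsq' + S ^ 2 * b₁ t * (γ ^ 2 + d ^ 2) * Complex.I_sq
      - (Ω : ℂ) ^ 2 * b₁ t * hcs
  have hn : ‖b₁ t‖ = ‖c₁ t‖ := by
    have : Complex.I * ((E₁ : ℂ) + d) * t = (((E₁ + d) * t : ℝ) : ℂ) * Complex.I := by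
      push_cast; ring
    simp only [hb₁, norm_mul]
    rw [this, Complex.norm_exp_ofReal_mul_I, one_mul]
  have hk := congrArg (fun z : ℂ => ‖z‖ ^ 2) key
  simp only [norm_mul, norm_neg, Complex.norm_I, Complex.norm_real, mul_pow, hn,
    Real.norm_eq_abs, sq_abs, one_pow, one_mul] at hk
  have : Ω ^ 2 ≠ 0 := by positivity
  field_simp
  linarith
end

section
/- (Resonance oscillation.) If ω = ω₂₁, then for every real t, |c₁(t)|² = sin²(γ t); in particular, if γ ≠ 0, then for every natural number k, |c₁((2k+1)π/(2γ))|² = 1, i.e. at the times (2k+1)π/(2γ) the system is found in the ground state with probability 1. -/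
open Complex Real

lemma hasDerivAt_expI (E t : ℝ) :
    HasDerivAt (fun t : ℝ => Complex.exp (Complex.I * E * t))
      (Complex.I * E * Complex.exp (Complex.I * E * t)) t := by
  have h : HasDerivAt (fun t : ℝ => Complex.I * E * (t : ℂ)) (Complex.I * E * 1) t :=
    (Complex.ofRealCLM.hasDerivAt (x := t)).const_mul (Complex.I * (E : ℂ))
  have h2 := h.cexp
  convert h2 using 1
  ring

lemma const_combo (γ s : ℝ) (hs : s * s = 1) (a b : ℝ → ℂ)
    (ha : ∀ t, HasDerivAt a (-Complex.I * γ * b t) t)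
    (hb : ∀ t, HasDerivAt b (-Complex.I * γ * a t) t)
    (ha0 : a 0 = 0) (hb0 : b 0 = 1) (t : ℝ) :
    Complex.exp (Complex.I * (s * γ : ℝ) * t) * (b t + s * a t) = 1 := by
  have hs' : (s : ℂ) * s = 1 := by exact_mod_cast hs
  have hd : ∀ t : ℝ, HasDerivAt
      (fun t : ℝ => Complex.exp (Complex.I * (s * γ : ℝ) * t) * (b t + s * a t)) 0 t := by
    intro t
    have h := (hasDerivAt_expI (s * γ) t).mul ((hb t).add ((ha t).const_mul (s : ℂ)))
    refine h.congr_deriv ?_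
    simp only [Pi.add_apply]
    push_cast
    linear_combination
      Complex.I * γ * Complex.exp (Complex.I * (s * γ) * t) * a t * hs'
  have hc := is_const_of_deriv_eq_zero (fun t => (hd t).differentiableAt)
    (fun t => (hd t).deriv) t 0
  simpa [ha0, hb0] using hc

/-- Resonance oscillation: if `ω = ω₂₁`, then `|c₁(t)|² = sin²(γ t)` for all `t`;
in particular, if `γ ≠ 0`, then `|c₁((2k+1)π/(2γ))|² = 1` for every natural `k`. -/
theorem resonance_oscillation
    (E₁ E₂ γ ω ω₂₁ : ℝ)
    (hω₂₁ : ω₂₁ = E₂ - E₁)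
    (hres : ω = ω₂₁)
    (c₁ c₂ : ℝ → ℂ)
    (hc₁ : Differentiable ℝ c₁) (hc₂ : Differentiable ℝ c₂)
    (heq₁ : ∀ t : ℝ, Complex.I * deriv c₁ t =
      (E₁ : ℂ) * c₁ t + (γ : ℂ) * Complex.exp (Complex.I * ω * t) * c₂ t)
    (heq₂ : ∀ t : ℝ, Complex.I * deriv c₂ t =
      (γ : ℂ) * Complex.exp (-(Complex.I * ω * t)) * c₁ t + (E₂ : ℂ) * c₂ t)
    (hinit₁ : c₁ 0 = 0) (hinit₂ : c₂ 0 = 1) :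
    (∀ t : ℝ, ‖c₁ t‖ ^ 2 = Real.sin (γ * t) ^ 2) ∧
    (γ ≠ 0 → ∀ k : ℕ,
      ‖c₁ ((2 * (k : ℝ) + 1) * Real.pi / (2 * γ))‖ ^ 2 = 1) := by
  have hI : ∀ z w : ℂ, Complex.I * z = w → z = -Complex.I * w := by
    intro z w h
    linear_combination (-Complex.I) * h + z * Complex.I_mul_I
  have hω : ω = E₂ - E₁ := hres.trans hω₂₁
  have ha : ∀ t : ℝ, HasDerivAt (fun t : ℝ => Complex.exp (Complex.I * E₁ * t) * c₁ t)
      (-Complex.I * γ * (Complex.exp (Complex.I * E₂ * t) * c₂ t)) t := by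
    intro t
    have h := (hasDerivAt_expI E₁ t).mul (hc₁ t).hasDerivAt
    refine h.congr_deriv ?_
    have e : Complex.exp (Complex.I * E₂ * t) =
        Complex.exp (Complex.I * E₁ * t) * Complex.exp (Complex.I * ω * t) := by
      rw [← Complex.exp_add, hω]; congr 1; push_cast; ring
    rw [hI _ _ (heq₁ t), e]
    ring
  have hb : ∀ t : ℝ, HasDerivAt (fun t : ℝ => Complex.exp (Complex.I * E₂ * t) * c₂ t)
      (-Complex.I * γ * (Complex.exp (Complex.I * E₁ * t) * c₁ t)) t := by
    intro t
    have h := (hasDerivAt_expI E₂ t).mul (hc₂ t).hasDerivAt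
    refine h.congr_deriv ?_
    have e : Complex.exp (Complex.I * E₁ * t) =
        Complex.exp (Complex.I * E₂ * t) * Complex.exp (-(Complex.I * ω * t)) := by
      rw [← Complex.exp_add, hω]; congr 1; push_cast; ring
    rw [hI _ _ (heq₂ t), e]
    ring
  have main : ∀ t : ℝ, ‖c₁ t‖ ^ 2 = Real.sin (γ * t) ^ 2 := by
    intro t
    have h1 := const_combo γ 1 (by norm_num) _ _ ha hb (by simp [hinit₁]) (by simp [hinit₂]) t
    have h2 := const_combo γ (-1) (by norm_num) _ _ ha hb (by simp [hinit₁]) (by simp [hinit₂]) t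
    have e1 : Complex.I * ((1 * γ : ℝ) : ℂ) * t = ((γ * t : ℝ) : ℂ) * Complex.I := by
      push_cast; ring
    have e2 : Complex.I * ((-1 * γ : ℝ) : ℂ) * t = ((-(γ * t) : ℝ) : ℂ) * Complex.I := by
      push_cast; ring
    rw [e1, Complex.exp_mul_I] at h1
    rw [e2, Complex.exp_mul_I] at h2
    simp only [Complex.ofReal_neg, Complex.cos_neg, Complex.sin_neg, Complex.ofReal_one] at h1 h2
    have hsc := Complex.sin_sq_add_cos_sq ((γ * t : ℝ) : ℂ)
    have key : Complex.exp (Complex.I * E₁ * t) * c₁ t =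
        -Complex.I * Complex.sin ((γ * t : ℝ) : ℂ) := by
      generalize Complex.sin ((γ * t : ℝ) : ℂ) = S at *
      generalize Complex.cos ((γ * t : ℝ) : ℂ) = C at *
      generalize Complex.exp (Complex.I * E₁ * t) * c₁ t = A at *
      generalize Complex.exp (Complex.I * E₂ * t) * c₂ t = B at *
      linear_combination (C - S * Complex.I) / 2 * h1 - (C + S * Complex.I) / 2 * h2 - A * hsc
        + S ^ 2 * A * Complex.I_mul_I
    have hn : ‖c₁ t‖ = |Real.sin (γ * t)| := by
      have h := congrArg norm key
      have e : Complex.I * (E₁ : ℂ) * t = ((E₁ * t : ℝ) : ℂ) * Complex.I := by push_cast; ring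
      rw [norm_mul, norm_mul, e, Complex.norm_exp_ofReal_mul_I, ← Complex.ofReal_sin,
        Complex.norm_real] at h
      simpa using h
    rw [hn, sq_abs]
  refine ⟨main, fun hγ k => ?_⟩
  rw [main]
  have e : γ * ((2 * (k : ℝ) + 1) * Real.pi / (2 * γ)) = Real.pi / 2 + k * Real.pi := by
    field_simp
    ring
  rw [e, Real.sin_add_nat_mul_pi, Real.sin_pi_div_two, mul_one, ← pow_mul, mul_comm, pow_mul]
  norm_num
end

section
/- (Peak and period of the Rabi oscillation.) The supremum over t ∈ ℝ of |c₁(t)|² equals γ²/Ω² = γ²/(γ² + (ω − ω₂₁)²/4), and this supremum is attained at t = π/(2Ω); moreover the function t ↦ |c₁(t)|² is periodic with period π/Ω. -/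
open Complex Real

/-- Explicit solution of the constant-coefficient system in the rotating frame. -/
lemma rabi_rotating (d g W : ℝ) (hW : 0 < W) (hsq : W ^ 2 = g ^ 2 + d ^ 2) (u v : ℝ → ℂ)
    (hu : ∀ t, HasDerivAt u (-Complex.I * (d * u t + g * v t)) t)
    (hv : ∀ t, HasDerivAt v (-Complex.I * (g * u t - d * v t)) t)
    (hu0 : u 0 = 0) (hv0 : v 0 = 1) (t : ℝ) :
    u t = -Complex.I * (g / W : ℝ) * (Real.sin (W * t) : ℝ) := by
  have hWc : (W : ℂ) ≠ 0 := by exact_mod_cast hW.ne'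
  have hsqc : (W : ℂ) ^ 2 = g ^ 2 + d ^ 2 := by exact_mod_cast hsq
  have hlin : ∀ t : ℝ, HasDerivAt (fun t : ℝ => W * t) W t := fun t => by
    simpa using (hasDerivAt_id t).const_mul W
  have hcos : ∀ t : ℝ, HasDerivAt (fun t : ℝ => ((Real.cos (W * t) : ℝ) : ℂ))
      ((-Real.sin (W * t) * W : ℝ) : ℂ) t := fun t => ((hlin t).cos).ofReal_comp
  have hsin : ∀ t : ℝ, HasDerivAt (fun t : ℝ => ((Real.sin (W * t) : ℝ) : ℂ))
      ((Real.cos (W * t) * W : ℝ) : ℂ) t := fun t => ((hlin t).sin).ofReal_comp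
  have hP : ∀ t : ℝ, HasDerivAt (fun t : ℝ => W * (((Real.cos (W * t) : ℝ) : ℂ) * u t)
      + Complex.I * (((Real.sin (W * t) : ℝ) : ℂ) * (d * u t + g * v t))) 0 t := fun t => by
    refine ((((hcos t).mul (hu t)).const_mul (W : ℂ)).add (((hsin t).mul
      (((hu t).const_mul (d : ℂ)).add ((hv t).const_mul (g : ℂ)))).const_mul Complex.I)).congr_deriv ?_
    simp only [Complex.ofReal_mul, Complex.ofReal_neg, Pi.add_apply]
    generalize ((Real.cos (W * t) : ℝ) : ℂ) = C
    generalize ((Real.sin (W * t) : ℝ) : ℂ) = S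
    linear_combination (-S * u t) * hsqc - (S * u t * (g ^ 2 + d ^ 2)) * Complex.I_sq
  have hQ : ∀ t : ℝ, HasDerivAt (fun t : ℝ => W * (((Real.cos (W * t) : ℝ) : ℂ) * v t)
      + Complex.I * (((Real.sin (W * t) : ℝ) : ℂ) * (g * u t - d * v t))) 0 t := fun t => by
    refine ((((hcos t).mul (hv t)).const_mul (W : ℂ)).add (((hsin t).mul
      (((hu t).const_mul (g : ℂ)).sub ((hv t).const_mul (d : ℂ)))).const_mul Complex.I)).congr_deriv ?_
    simp only [Complex.ofReal_mul, Complex.ofReal_neg, Pi.sub_apply]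
    generalize ((Real.cos (W * t) : ℝ) : ℂ) = C
    generalize ((Real.sin (W * t) : ℝ) : ℂ) = S
    linear_combination (-S * v t) * hsqc - (S * v t * (g ^ 2 + d ^ 2)) * Complex.I_sq
  have h1 := is_const_of_deriv_eq_zero (fun t => (hP t).differentiableAt) (fun t => (hP t).deriv) t 0
  have h2 := is_const_of_deriv_eq_zero (fun t => (hQ t).differentiableAt) (fun t => (hQ t).deriv) t 0
  have h3 : ((Real.sin (W * t) : ℝ) : ℂ) ^ 2 + ((Real.cos (W * t) : ℝ) : ℂ) ^ 2 = 1 := by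
    exact_mod_cast Real.sin_sq_add_cos_sq (W * t)
  simp only [hu0, hv0, mul_zero, Real.cos_zero, Real.sin_zero, Complex.ofReal_one,
    Complex.ofReal_zero, zero_mul, add_zero, mul_one] at h1 h2
  rw [Complex.ofReal_div]
  revert h1 h2 h3
  generalize ((Real.cos (W * t) : ℝ) : ℂ) = C
  generalize ((Real.sin (W * t) : ℝ) : ℂ) = S
  intro h3 h1 h2
  have key : (W : ℂ) ^ 2 * u t = -Complex.I * g * W * S := by
    linear_combination (W * C - Complex.I * S * d) * h1 - (Complex.I * S * g) * h2
      - (W ^ 2 * u t) * h3 + (S ^ 2 * u t * (g ^ 2 + d ^ 2)) * Complex.I_sq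
      + (S ^ 2 * u t) * hsqc
  field_simp
  apply mul_left_cancel₀ hWc
  linear_combination key

/-- Peak and period of the Rabi oscillation: the supremum over `t` of `|c₁(t)|²`
equals `γ²/Ω² = γ²/(γ² + (ω − ω₂₁)²/4)`, attained at `t = π/(2Ω)`, and
`t ↦ |c₁(t)|²` is periodic with period `π/Ω`. -/
theorem rabi_peak_and_period
    (E₁ E₂ γ ω ω₂₁ Ω : ℝ)
    (hω₂₁ : ω₂₁ = E₂ - E₁)
    (hΩ : Ω = Real.sqrt (γ ^ 2 + (ω - ω₂₁) ^ 2 / 4))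
    (hΩpos : 0 < Ω)
    (c₁ c₂ : ℝ → ℂ)
    (hc₁ : Differentiable ℝ c₁) (hc₂ : Differentiable ℝ c₂)
    (heq₁ : ∀ t : ℝ, Complex.I * deriv c₁ t =
      (E₁ : ℂ) * c₁ t + (γ : ℂ) * Complex.exp (Complex.I * ω * t) * c₂ t)
    (heq₂ : ∀ t : ℝ, Complex.I * deriv c₂ t =
      (γ : ℂ) * Complex.exp (-(Complex.I * ω * t)) * c₁ t + (E₂ : ℂ) * c₂ t)
    (hinit₁ : c₁ 0 = 0) (hinit₂ : c₂ 0 = 1) :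
    (⨆ t : ℝ, ‖c₁ t‖ ^ 2) = γ ^ 2 / Ω ^ 2 ∧
    γ ^ 2 / Ω ^ 2 = γ ^ 2 / (γ ^ 2 + (ω - ω₂₁) ^ 2 / 4) ∧
    ‖c₁ (Real.pi / (2 * Ω))‖ ^ 2 = γ ^ 2 / Ω ^ 2 ∧
    Function.Periodic (fun t : ℝ => ‖c₁ t‖ ^ 2) (Real.pi / Ω) := by
  have hnn : 0 ≤ γ ^ 2 + (ω - ω₂₁) ^ 2 / 4 := by positivity
  have hΩsq : Ω ^ 2 = γ ^ 2 + (ω - ω₂₁) ^ 2 / 4 := by rw [hΩ, Real.sq_sqrt hnn]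
  have hI := Complex.I_sq
  have hd1 : ∀ t : ℝ, HasDerivAt c₁ (-Complex.I * ((E₁ : ℂ) * c₁ t
      + (γ : ℂ) * Complex.exp (Complex.I * ω * t) * c₂ t)) t := fun t => by
    refine (hc₁ t).hasDerivAt.congr_deriv ?_
    rw [← heq₁ t]; linear_combination (deriv c₁ t) * hI
  have hd2 : ∀ t : ℝ, HasDerivAt c₂ (-Complex.I * ((γ : ℂ) * Complex.exp (-(Complex.I * ω * t)) * c₁ t
      + (E₂ : ℂ) * c₂ t)) t := fun t => by
    refine (hc₂ t).hasDerivAt.congr_deriv ?_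
    rw [← heq₂ t]; linear_combination (deriv c₂ t) * hI
  have hexp : ∀ (a : ℂ) (t : ℝ), HasDerivAt (fun t : ℝ => Complex.exp (Complex.I * a * t))
      (Complex.exp (Complex.I * a * t) * (Complex.I * a)) t := fun a t => by
    have h : HasDerivAt (fun t : ℝ => Complex.I * a * (t : ℂ)) (Complex.I * a) t := by
      simpa using ((hasDerivAt_id t).ofReal_comp).const_mul (Complex.I * a)
    exact h.cexp
  have hsol : ∀ t : ℝ, ‖c₁ t‖ ^ 2 = γ ^ 2 / Ω ^ 2 * Real.sin (Ω * t) ^ 2 := fun t => by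
    have h := rabi_rotating ((ω - ω₂₁) / 2) γ Ω hΩpos (by rw [hΩsq]; ring)
      (fun t => Complex.exp (Complex.I * (((E₁ + E₂ - ω) / 2 : ℝ) : ℂ) * t) * c₁ t)
      (fun t => Complex.exp (Complex.I * (((E₁ + E₂ + ω) / 2 : ℝ) : ℂ) * t) * c₂ t)
      (fun t => by
        refine ((hexp _ t).mul (hd1 t)).congr_deriv ?_
        have e : Complex.exp (Complex.I * (((E₁ + E₂ + ω) / 2 : ℝ) : ℂ) * t)
            = Complex.exp (Complex.I * (((E₁ + E₂ - ω) / 2 : ℝ) : ℂ) * t)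
              * Complex.exp (Complex.I * ω * t) := by
          rw [← Complex.exp_add]; congr 1; push_cast; ring
        rw [e, hω₂₁]; push_cast; ring)
      (fun t => by
        refine ((hexp _ t).mul (hd2 t)).congr_deriv ?_
        have e : Complex.exp (Complex.I * (((E₁ + E₂ - ω) / 2 : ℝ) : ℂ) * t)
            = Complex.exp (Complex.I * (((E₁ + E₂ + ω) / 2 : ℝ) : ℂ) * t)
              * Complex.exp (-(Complex.I * ω * t)) := by
          rw [← Complex.exp_add]; congr 1; push_cast; ring
        rw [e, hω₂₁]; push_cast; ring)
      (by simp [hinit₁]) (by simp [hinit₂]) t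
    have hn := congrArg (fun z : ℂ => ‖z‖ ^ 2) h
    have e1 : ‖Complex.exp (Complex.I * (((E₁ + E₂ - ω) / 2 : ℝ) : ℂ) * t)‖ = 1 := by
      rw [mul_assoc, ← Complex.ofReal_mul, Complex.norm_exp_I_mul_ofReal]
    simp only [norm_mul, e1, norm_neg, Complex.norm_I, Complex.norm_real, one_mul, mul_pow,
      Real.norm_eq_abs, sq_abs, div_pow] at hn
    exact hn
  have hpeak : ‖c₁ (Real.pi / (2 * Ω))‖ ^ 2 = γ ^ 2 / Ω ^ 2 := by
    rw [hsol, show Ω * (Real.pi / (2 * Ω)) = Real.pi / 2 by field_simp, Real.sin_pi_div_two]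
    ring
  have hle : ∀ t, ‖c₁ t‖ ^ 2 ≤ γ ^ 2 / Ω ^ 2 := fun t => by
    rw [hsol]
    exact mul_le_of_le_one_right (by positivity) (Real.sin_sq_le_one _)
  refine ⟨le_antisymm (ciSup_le hle) ?_, by rw [hΩsq], hpeak, fun t => ?_⟩
  · rw [← hpeak]
    exact le_ciSup (f := fun t : ℝ => ‖c₁ t‖ ^ 2)
      ⟨γ ^ 2 / Ω ^ 2, by rintro _ ⟨t, rfl⟩; exact hle t⟩ (Real.pi / (2 * Ω))
  · simp only [hsol]
    rw [show Ω * (t + Real.pi / Ω) = Ω * t + Real.pi by field_simp, Real.sin_add_pi, neg_sq]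
end

section
/- (Symmetry reduction for Algorithm 1.) For every Algorithm-1 solution, and for all indices p, q with 3 ≤ p ≤ N and 3 ≤ q ≤ N, one has c_p(t) = c_q(t) for all t ∈ ℝ; that is, the N first-order equations reduce to three independent amplitudes c₁, c₂, c₃. -/
open Complex Real Finset

/-- The perturbation matrix entry `⟨p|V_{[2,γ,ω]}(t)|q⟩` of Algorithm 1
(with initial state `j = 2`). -/
noncomputable def V1 (γ ω : ℝ) (p q : ℕ) (t : ℝ) : ℂ :=
  if q = 2 ∧ p ≠ 2 then (γ : ℂ) * Complex.exp (Complex.I * ω * t)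
  else if p = 2 ∧ q ≠ 2 then (γ : ℂ) * Complex.exp (-(Complex.I * ω * t))
  else 0

/-- Symmetry reduction for Algorithm 1: for every Algorithm-1 solution and all
indices `p, q` with `3 ≤ p ≤ N` and `3 ≤ q ≤ N`, one has `c_p(t) = c_q(t)` for
all `t`. -/
theorem algorithm1_symmetry_reduction
    (N : ℕ) (hN : 3 ≤ N) (E γ ω : ℝ) (hE : 0 < E)
    (c : ℕ → ℝ → ℂ)
    (hdiff : ∀ p, Differentiable ℝ (c p))
    (heq : ∀ p, 1 ≤ p → p ≤ N → ∀ t : ℝ,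
      Complex.I * deriv (c p) t =
        ((if p = 1 then (0 : ℝ) else E) : ℂ) * c p t +
          ∑ q ∈ Finset.Icc 1 N, V1 γ ω p q t * c q t)
    (hinit₂ : c 2 0 = 1)
    (hinit : ∀ p, p ≠ 2 → c p 0 = 0) :
    ∀ p q, 3 ≤ p → p ≤ N → 3 ≤ q → q ≤ N → ∀ t : ℝ, c p t = c q t := by
  intro p q hp hpN hq hqN t
  have hs : ∀ s : ℝ, ∑ k ∈ Finset.Icc 1 N, V1 γ ω p k s * c k s
      = ∑ k ∈ Finset.Icc 1 N, V1 γ ω q k s * c k s := by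
    intro s
    refine Finset.sum_congr rfl fun k _ => ?_
    have h1 : p ≠ 2 := by omega
    have h2 : q ≠ 2 := by omega
    simp [V1, h1, h2]
  have hd : ∀ s : ℝ, deriv (c p) s - deriv (c q) s = -(Complex.I * E) * (c p s - c q s) := by
    intro s
    have e1 := heq p (by omega) hpN s
    have e2 := heq q (by omega) hqN s
    rw [if_neg (by omega)] at e1 e2
    rw [hs s] at e1
    linear_combination (-Complex.I) * (e1 - e2) + (deriv (c p) s - deriv (c q) s) * Complex.I_mul_I
  have hf : ∀ s : ℝ, HasDerivAt
      (fun s : ℝ => Complex.exp (Complex.I * E * s) * (c p s - c q s)) 0 s := by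
    intro s
    have h1 : HasDerivAt (fun s : ℝ => Complex.I * E * (s : ℂ)) (Complex.I * E * 1) s :=
      (Complex.ofRealCLM.hasDerivAt (x := s)).const_mul _
    have h2 := h1.cexp.mul ((hdiff p s).hasDerivAt.sub (hdiff q s).hasDerivAt)
    refine h2.congr_deriv ?_
    rw [hd s]
    simp only [Pi.sub_apply]
    ring
  have hc := is_const_of_deriv_eq_zero (fun s => (hf s).differentiableAt)
    (fun s => (hf s).deriv) t 0
  simp only [hinit p (by omega), hinit q (by omega), sub_self, mul_zero] at hc
  exact sub_eq_zero.mp ((mul_eq_zero.mp hc).resolve_left (Complex.exp_ne_zero _))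
end

section
/- (Third-order equation for the ground-state amplitude of Algorithm 1.) For every Algorithm-1 reduced solution, the function b₁ is three times differentiable and satisfies, for all t ∈ ℝ: b₁‴(t) + i·ω·b₁″(t) + (N−1)·γ²·b₁′(t) + i·ω·γ²·b₁(t) = 0. -/
open Complex Real

/-- Third-order ODE for the ground-state amplitude of Algorithm 1: for every
Algorithm-1 reduced solution, `b₁` is three times differentiable and satisfies
`b₁‴ + i·ω·b₁″ + (N−1)·γ²·b₁′ + i·ω·γ²·b₁ = 0`. -/
theorem algorithm1_third_order_ode
    (N : ℕ) (hN : 2 ≤ N) (γ ω : ℝ)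
    (b₁ b₂ b₃ : ℝ → ℂ)
    (hd₁ : Differentiable ℝ b₁) (hd₂ : Differentiable ℝ b₂)
    (hd₃ : Differentiable ℝ b₃)
    (heq₁ : ∀ t : ℝ, Complex.I * deriv b₁ t = (γ : ℂ) * b₂ t)
    (heq₂ : ∀ t : ℝ, Complex.I * deriv b₂ t =
      (γ : ℂ) * b₁ t +
        ((N : ℂ) - 2) * γ * Complex.exp (-(Complex.I * ω * t)) * b₃ t)
    (heq₃ : ∀ t : ℝ, Complex.I * deriv b₃ t =
      (γ : ℂ) * Complex.exp (Complex.I * ω * t) * b₂ t) :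
    Differentiable ℝ (deriv b₁) ∧
    Differentiable ℝ (deriv (deriv b₁)) ∧
    ∀ t : ℝ,
      deriv (deriv (deriv b₁)) t + Complex.I * ω * deriv (deriv b₁) t +
        ((N : ℂ) - 1) * γ ^ 2 * deriv b₁ t +
        Complex.I * ω * γ ^ 2 * b₁ t = 0 := by
  have e1 : deriv b₁ = fun t => -(Complex.I * γ) * b₂ t := by
    funext t
    linear_combination (-Complex.I) * heq₁ t + (deriv b₁ t) * Complex.I_mul_I
  have e2 : deriv (deriv b₁) = fun t : ℝ => -(γ : ℂ) ^ 2 *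
      (b₁ t + ((N : ℂ) - 2) * (Complex.exp (-(Complex.I * ω * t)) * b₃ t)) := by
    funext t
    have h : deriv (deriv b₁) t = -(Complex.I * γ) * deriv b₂ t := by
      rw [e1]
      exact ((hd₂ t).hasDerivAt.const_mul _).deriv
    rw [h]
    linear_combination (-(γ : ℂ)) * heq₂ t
  have hE : ∀ t : ℝ, HasDerivAt (fun t : ℝ => Complex.exp (-(Complex.I * ω * t)))
      (Complex.exp (-(Complex.I * ω * t)) * (-(Complex.I * ω * 1))) t := by
    intro t
    exact (((Complex.ofRealCLM.hasDerivAt (x := t)).const_mul (Complex.I * (ω : ℂ))).neg).cexp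
  have h3 : ∀ t : ℝ, HasDerivAt (deriv (deriv b₁)) (-(γ : ℂ) ^ 2 *
      (deriv b₁ t + ((N : ℂ) - 2) *
        (Complex.exp (-(Complex.I * ω * t)) * (-(Complex.I * ω * 1)) * b₃ t +
          Complex.exp (-(Complex.I * ω * t)) * deriv b₃ t))) t := by
    intro t
    rw [e2]
    exact ((hd₁ t).hasDerivAt.add
      (((hE t).mul (hd₃ t).hasDerivAt).const_mul _)).const_mul _
  refine ⟨?_, fun t => (h3 t).differentiableAt, ?_⟩
  · rw [e1]
    exact hd₂.const_mul _
  · intro t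
    have hx : Complex.exp (-(Complex.I * ω * t)) * Complex.exp (Complex.I * ω * t) = 1 := by
      rw [← Complex.exp_add]; simp
    have h4 : Complex.exp (-(Complex.I * ω * t)) * deriv b₃ t = deriv b₁ t := by
      have a := heq₃ t
      have b := heq₁ t
      apply mul_left_cancel₀ Complex.I_ne_zero
      linear_combination Complex.exp (-(Complex.I * ω * t)) * a - b + γ * b₂ t * hx
    rw [(h3 t).deriv, h4, congrFun e2 t]
    ring
end

section
/- (Symmetry reduction for Algorithm 2.) For every Algorithm-2 solution: for all odd indices p, q with 3 ≤ p, q ≤ N−1, c_p(t) = c_q(t) for all t ∈ ℝ, and for all even indices p, q with 4 ≤ p, q ≤ N, c_p(t) = c_q(t) for all t ∈ ℝ; that is, the N first-order equations reduce to four independent amplitudes c₁, c₂, c₃, c₄. -/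
open Complex Real Finset

/-- The perturbation matrix entry `⟨p|V^o_{[2,γ,ω]}(t)|q⟩` of Algorithm 2
(with initial state `j = 2`). -/
noncomputable def V2o (γ ω : ℝ) (p q : ℕ) (t : ℝ) : ℂ :=
  if (p = 2 ∧ q ≠ 2 ∧ Even q) ∨ (q = 2 ∧ p ≠ 2 ∧ Odd p) then
    (γ : ℂ) * Complex.exp (Complex.I * ω * t)
  else if (q = 2 ∧ p ≠ 2 ∧ Even p) ∨ (p = 2 ∧ q ≠ 2 ∧ Odd q) then
    (γ : ℂ) * Complex.exp (-(Complex.I * ω * t))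
  else 0

theorem aux_sym_amp
    (N : ℕ) (E γ ω : ℝ)
    (c : ℕ → ℝ → ℂ)
    (hdiff : ∀ p, Differentiable ℝ (c p))
    (heq : ∀ p, 1 ≤ p → p ≤ N → ∀ t : ℝ,
      Complex.I * deriv (c p) t =
        ((if p = 1 then (0 : ℝ) else E) : ℂ) * c p t +
          ∑ q ∈ Finset.Icc 1 N, V2o γ ω p q t * c q t)
    (hinit : ∀ p, p ≠ 2 → c p 0 = 0)
    (p q : ℕ) (hp : 3 ≤ p) (hpN : p ≤ N) (hq : 3 ≤ q) (hqN : q ≤ N)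
    (hpar : Even p ↔ Even q) (t : ℝ) : c p t = c q t := by
  have hpar' : Odd p ↔ Odd q := by
    rw [← Nat.not_even_iff_odd, ← Nat.not_even_iff_odd, hpar]
  have hp2 : p ≠ 2 := by omega
  have hq2 : q ≠ 2 := by omega
  have hp1 : p ≠ 1 := by omega
  have hq1 : q ≠ 1 := by omega
  have hV : ∀ r s, V2o γ ω p r s = V2o γ ω q r s := by
    intro r s
    unfold V2o
    simp only [ne_eq, hp2, hq2, hpar, hpar']
  have hd : ∀ s, deriv (c p) s - deriv (c q) s = -(Complex.I * E) * (c p s - c q s) := by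
    intro s
    have h1 := heq p (by omega) hpN s
    have h2 := heq q (by omega) hqN s
    simp only [hV, hp1, hq1, if_false] at h1 h2
    linear_combination (-Complex.I) * (h1 - h2) +
      (deriv (c p) s - deriv (c q) s) * Complex.I_mul_I
  have hF : ∀ s : ℝ, HasDerivAt
      (fun s : ℝ => (c p s - c q s) * Complex.exp (Complex.I * E * s)) 0 s := by
    intro s
    have he : HasDerivAt (fun s : ℝ => Complex.exp (Complex.I * E * s))
        (Complex.exp (Complex.I * E * s) * (Complex.I * E * 1)) s :=
      ((Complex.ofRealCLM.hasDerivAt (x := s)).const_mul (Complex.I * (E : ℂ))).cexp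
    have h := ((hdiff p s).hasDerivAt.sub (hdiff q s).hasDerivAt).mul he
    refine h.congr_deriv ?_
    rw [hd s]
    simp only [Pi.sub_apply]
    ring
  have hc := is_const_of_deriv_eq_zero (fun s => (hF s).differentiableAt)
    (fun s => (hF s).deriv) t 0
  simp only [hinit p hp2, hinit q hq2, sub_self, zero_mul] at hc
  rcases mul_eq_zero.mp hc with h | h
  · exact sub_eq_zero.mp h
  · exact absurd h (Complex.exp_ne_zero _)

/-- Symmetry reduction for Algorithm 2: for every Algorithm-2 solution, all odd
amplitudes `c_p` with `3 ≤ p ≤ N−1` coincide, and all even amplitudes `c_p`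
with `4 ≤ p ≤ N` coincide. -/
theorem algorithm2_symmetry_reduction
    (N : ℕ) (hN : 4 ≤ N) (hNeven : Even N) (E γ ω : ℝ) (hE : 0 < E)
    (c : ℕ → ℝ → ℂ)
    (hdiff : ∀ p, Differentiable ℝ (c p))
    (heq : ∀ p, 1 ≤ p → p ≤ N → ∀ t : ℝ,
      Complex.I * deriv (c p) t =
        ((if p = 1 then (0 : ℝ) else E) : ℂ) * c p t +
          ∑ q ∈ Finset.Icc 1 N, V2o γ ω p q t * c q t)
    (hinit₂ : c 2 0 = 1)
    (hinit : ∀ p, p ≠ 2 → c p 0 = 0) :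
    (∀ p q, 3 ≤ p → p ≤ N - 1 → 3 ≤ q → q ≤ N - 1 → Odd p → Odd q →
      ∀ t : ℝ, c p t = c q t) ∧
    (∀ p q, 4 ≤ p → p ≤ N → 4 ≤ q → q ≤ N → Even p → Even q →
      ∀ t : ℝ, c p t = c q t) := by
  refine ⟨fun p q hp hpN hq hqN op oq t => ?_, fun p q hp hpN hq hqN ep eq t => ?_⟩
  · refine aux_sym_amp N E γ ω c hdiff heq hinit p q hp (by omega) hq (by omega) ?_ t
    simp [Nat.not_even_iff_odd.mpr op, Nat.not_even_iff_odd.mpr oq]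
  · exact aux_sym_amp N E γ ω c hdiff heq hinit p q (by omega) hpN (by omega) hqN
      ⟨fun _ => eq, fun _ => ep⟩ t
end

section
/- (Reduced equations for Algorithm 2 at resonance.) Assume ω = E. For every Algorithm-2 solution, the functions b₁(t) := c₁(t), b₂(t) := e^{iEt}·c₂(t), b₃(t) := e^{iEt}·c₃(t), b₄(t) := e^{iEt}·c₄(t) satisfy, for all t ∈ ℝ: i·b₁′(t) = γ·b₂(t), i·b₂′(t) = γ·b₁(t) + ((N−2)/2)·γ·(e^{−iEt}·b₃(t) + e^{iEt}·b₄(t)), i·b₃′(t) = γ·e^{iEt}·b₂(t), and i·b₄′(t) = γ·e^{−iEt}·b₂(t). -/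
open Complex Real Finset

theorem sum_aux (f : ℕ → ℂ) (A B : ℂ) (h2 : f 2 = 0) (k : ℕ)
    (ho : ∀ q, 3 ≤ q → q ≤ 2 * k + 2 → Odd q → f q = A)
    (he : ∀ q, 3 ≤ q → q ≤ 2 * k + 2 → Even q → f q = B) :
    ∑ q ∈ Finset.Icc 1 (2 * k + 2), f q = f 1 + k * (A + B) := by
  induction k with
  | zero =>
    rw [show Finset.Icc 1 (2 * 0 + 2) = {1, 2} by decide]
    simp [h2]
  | succ k ih =>
    have ih' := ih (fun q h h' => ho q h (by omega)) (fun q h h' => he q h (by omega))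
    rw [show 2 * (k + 1) + 2 = 2 * k + 2 + 1 + 1 by ring,
      Finset.sum_Icc_succ_top (by omega), Finset.sum_Icc_succ_top (by omega), ih',
      ho (2 * k + 2 + 1) (by omega) (by omega) ⟨k + 1, by ring⟩,
      he (2 * k + 2 + 1 + 1) (by omega) (by omega) ⟨k + 2, by ring⟩]
    push_cast
    ring

theorem hasDeriv_aux (E : ℝ) (f : ℝ → ℂ) (hf : Differentiable ℝ f) (t : ℝ) :
    HasDerivAt (fun t : ℝ => Complex.exp (Complex.I * E * t) * f t)
      (Complex.exp (Complex.I * E * t) * (Complex.I * E * f t + deriv f t)) t := by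
  have h1 : HasDerivAt (fun t : ℝ => Complex.I * E * (t : ℂ)) (Complex.I * E * 1) t :=
    (Complex.ofRealCLM.hasDerivAt (x := t)).const_mul (Complex.I * (E : ℂ))
  have h2 := h1.cexp.mul (hf t).hasDerivAt
  refine h2.congr_deriv ?_
  ring

theorem const_aux (f : ℝ → ℂ) (g : ℝ → ℂ) (f' : ℝ → ℂ)
    (hf : ∀ t, HasDerivAt f (f' t) t) (hg : ∀ t, HasDerivAt g (f' t) t)
    (h0 : f 0 = g 0) (t : ℝ) : f t = g t := by
  have hd : ∀ t, HasDerivAt (fun t => f t - g t) 0 t := fun t =>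
    ((hf t).sub (hg t)).congr_deriv (sub_self _)
  have := is_const_of_deriv_eq_zero (fun t => (hd t).differentiableAt)
    (fun t => (hd t).deriv) t 0
  simp only [h0, sub_self] at this
  exact sub_eq_zero.mp this

/-- Reduced equations for Algorithm 2 at resonance `ω = E`: the functions
`b₁ = c₁`, `b₂ = e^{iEt}c₂`, `b₃ = e^{iEt}c₃`, `b₄ = e^{iEt}c₄` satisfy
`i·b₁′ = γ·b₂`, `i·b₂′ = γ·b₁ + ((N−2)/2)·γ·(e^{−iEt}·b₃ + e^{iEt}·b₄)`,
`i·b₃′ = γ·e^{iEt}·b₂`, and `i·b₄′ = γ·e^{−iEt}·b₂`. -/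
theorem algorithm2_reduced_equations
    (N : ℕ) (hN : 4 ≤ N) (hNeven : Even N) (E γ ω : ℝ) (hE : 0 < E)
    (hres : ω = E)
    (c : ℕ → ℝ → ℂ)
    (hdiff : ∀ p, Differentiable ℝ (c p))
    (heq : ∀ p, 1 ≤ p → p ≤ N → ∀ t : ℝ,
      Complex.I * deriv (c p) t =
        ((if p = 1 then (0 : ℝ) else E) : ℂ) * c p t +
          ∑ q ∈ Finset.Icc 1 N, V2o γ ω p q t * c q t)
    (hinit₂ : c 2 0 = 1)
    (hinit : ∀ p, p ≠ 2 → c p 0 = 0)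
    (b₁ b₂ b₃ b₄ : ℝ → ℂ)
    (hb₁ : b₁ = c 1)
    (hb₂ : b₂ = fun t : ℝ => Complex.exp (Complex.I * E * t) * c 2 t)
    (hb₃ : b₃ = fun t : ℝ => Complex.exp (Complex.I * E * t) * c 3 t)
    (hb₄ : b₄ = fun t : ℝ => Complex.exp (Complex.I * E * t) * c 4 t) :
    ∀ t : ℝ,
      Complex.I * deriv b₁ t = (γ : ℂ) * b₂ t ∧
      Complex.I * deriv b₂ t =
        (γ : ℂ) * b₁ t +
          (((N : ℂ) - 2) / 2) * γ *
            (Complex.exp (-(Complex.I * E * t)) * b₃ t +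
              Complex.exp (Complex.I * E * t) * b₄ t) ∧
      Complex.I * deriv b₃ t = (γ : ℂ) * Complex.exp (Complex.I * E * t) * b₂ t ∧
      Complex.I * deriv b₄ t =
        (γ : ℂ) * Complex.exp (-(Complex.I * E * t)) * b₂ t := by
  subst hres hb₁ hb₂ hb₃ hb₄
  have hsum : ∀ p, p ≠ 2 → ∀ t : ℝ,
      ∑ q ∈ Finset.Icc 1 N, V2o γ ω p q t * c q t = V2o γ ω p 2 t * c 2 t := by
    intro p hp t
    apply Finset.sum_eq_single 2
    · intro q _ hq
      simp [V2o, hp, hq]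
    · intro h
      exact absurd (Finset.mem_Icc.mpr ⟨by omega, by omega⟩) h
  have hVo : ∀ p, Odd p → ∀ t, V2o γ ω p 2 t = γ * Complex.exp (Complex.I * ω * t) := by
    intro p hp t
    have : p ≠ 2 := by rintro rfl; exact absurd hp (by decide)
    simp [V2o, hp, this]
  have hVe : ∀ p, p ≠ 2 → Even p → ∀ t,
      V2o γ ω p 2 t = γ * Complex.exp (-(Complex.I * ω * t)) := by
    intro p hp2 hp t
    have : ¬ Odd p := Nat.not_odd_iff_even.mpr hp
    simp [V2o, hp, this, hp2]
  -- derivative of the rotated functions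
  have hder : ∀ p, 2 ≤ p → p ≤ N → ∀ t : ℝ,
      HasDerivAt (fun t : ℝ => Complex.exp (Complex.I * ω * t) * c p t)
        (-Complex.I * (Complex.exp (Complex.I * ω * t) *
          ∑ q ∈ Finset.Icc 1 N, V2o γ ω p q t * c q t)) t := by
    intro p h1 h2 t
    refine (hasDeriv_aux ω (c p) (hdiff p) t).congr_deriv ?_
    have h := heq p (by omega) h2 t
    rw [if_neg (by omega)] at h
    have hI := Complex.I_mul_I
    linear_combination (-Complex.I * Complex.exp (Complex.I * ω * t)) * h +
      (Complex.exp (Complex.I * ω * t) * deriv (c p) t) * hI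
  have hcancel : ∀ x y : ℂ, ∀ t : ℝ, Complex.exp (Complex.I * ω * t) * x =
      Complex.exp (Complex.I * ω * t) * y → x = y := fun x y t h =>
    mul_left_cancel₀ (Complex.exp_ne_zero _) h
  have hodd : ∀ q, 3 ≤ q → q ≤ N → Odd q → ∀ t, c q t = c 3 t := by
    intro q h3 hqN hq t
    refine hcancel _ _ t (const_aux _
      (fun t : ℝ => Complex.exp (Complex.I * ω * t) * c 3 t) _ (hder q (by omega) hqN) (fun s => ?_) ?_ t)
    · refine (hder 3 (by omega) (by omega) s).congr_deriv ?_
      rw [hsum 3 (by omega), hsum q (by omega), hVo 3 (by decide), hVo q hq]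
    · simp only [hinit q (by omega), hinit 3 (by omega)]
  have heven : ∀ q, 3 ≤ q → q ≤ N → Even q → ∀ t, c q t = c 4 t := by
    intro q h3 hqN hq t
    refine hcancel _ _ t (const_aux _
      (fun t : ℝ => Complex.exp (Complex.I * ω * t) * c 4 t) _ (hder q (by omega) hqN) (fun s => ?_) ?_ t)
    · refine (hder 4 (by omega) (by omega) s).congr_deriv ?_
      rw [hsum 4 (by omega), hsum q (by omega), hVe 4 (by omega) (by decide),
        hVe q (by omega) hq]
    · simp only [hinit q (by omega), hinit 4 (by omega)]
  intro t
  have hexp : Complex.exp (Complex.I * ω * t) * Complex.exp (-(Complex.I * ω * t)) = 1 := by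
    rw [← Complex.exp_add, add_neg_cancel, Complex.exp_zero]
  have hI := Complex.I_mul_I
  refine ⟨?_, ?_, ?_, ?_⟩
  · rw [heq 1 le_rfl (by omega) t, hsum 1 (by omega), hVo 1 (by decide)]
    simp only [if_true, Complex.ofReal_zero]
    ring
  · rw [(hder 2 le_rfl (by omega) t).deriv]
    obtain ⟨m, hm⟩ := hNeven
    obtain ⟨k, rfl⟩ : ∃ k, N = 2 * k + 2 := ⟨m - 1, by omega⟩
    rw [sum_aux (fun q => V2o γ ω 2 q t * c q t)
      (γ * Complex.exp (-(Complex.I * ω * t)) * c 3 t)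
      (γ * Complex.exp (Complex.I * ω * t) * c 4 t) (by simp [V2o]) k ?_ ?_]
    · have h1 : V2o γ ω 2 1 t = γ * Complex.exp (-(Complex.I * ω * t)) := by
        simp [V2o]
      simp only [h1]
      push_cast
      generalize Complex.exp (Complex.I * ω * t) = e at *
      generalize Complex.exp (-(Complex.I * ω * t)) = e' at *
      linear_combination (-(e * (γ * e' * c 1 t + k * (γ * e' * c 3 t + γ * e * c 4 t)))) * hI
        + γ * c 1 t * hexp
    · intro q h3 hq ho
      have hne : ¬ Even q := Nat.not_even_iff_odd.mpr ho
      have h2 : q ≠ 2 := by omega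
      simp only [hodd q h3 hq ho t]
      simp [V2o, hne, ho, h2]
    · intro q h3 hq he
      have h2 : q ≠ 2 := by omega
      simp only [heven q h3 hq he t]
      simp [V2o, he, h2]
  · rw [(hder 3 (by omega) (by omega) t).deriv, hsum 3 (by omega), hVo 3 (by decide)]
    linear_combination (-(Complex.exp (Complex.I * ω * t) *
      (γ * Complex.exp (Complex.I * ω * t) * c 2 t))) * hI
  · rw [(hder 4 (by omega) (by omega) t).deriv, hsum 4 (by omega),
      hVe 4 (by omega) (by decide)]
    linear_combination (-(Complex.exp (Complex.I * ω * t) *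
      (γ * Complex.exp (-(Complex.I * ω * t)) * c 2 t))) * hI
end

section
/- (Fourth-order equation for the ground-state amplitude of Algorithm 2.) For every Algorithm-2 reduced solution, the function b₁ is four times differentiable and satisfies, for all t ∈ ℝ: b₁⁗(t) + ((N−1)·γ² + ω²)·b₁″(t) + γ²·ω²·b₁(t) = 0. -/
open Complex Real

/-- Fourth-order ODE for the ground-state amplitude of Algorithm 2: for every
Algorithm-2 reduced solution, `b₁` is four times differentiable and satisfies
`b₁⁗ + ((N−1)·γ² + ω²)·b₁″ + γ²·ω²·b₁ = 0`. -/
theorem algorithm2_fourth_order_ode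
    (N : ℕ) (hN : 2 ≤ N) (γ ω : ℝ)
    (b₁ b₂ b₃ b₄ : ℝ → ℂ)
    (hd₁ : Differentiable ℝ b₁) (hd₂ : Differentiable ℝ b₂)
    (hd₃ : Differentiable ℝ b₃) (hd₄ : Differentiable ℝ b₄)
    (heq₁ : ∀ t : ℝ, Complex.I * deriv b₁ t = (γ : ℂ) * b₂ t)
    (heq₂ : ∀ t : ℝ, Complex.I * deriv b₂ t =
      (γ : ℂ) * b₁ t +
        (((N : ℂ) - 2) / 2) * γ *
          (Complex.exp (-(Complex.I * ω * t)) * b₃ t +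
            Complex.exp (Complex.I * ω * t) * b₄ t))
    (heq₃ : ∀ t : ℝ, Complex.I * deriv b₃ t =
      (γ : ℂ) * Complex.exp (Complex.I * ω * t) * b₂ t)
    (heq₄ : ∀ t : ℝ, Complex.I * deriv b₄ t =
      (γ : ℂ) * Complex.exp (-(Complex.I * ω * t)) * b₂ t) :
    Differentiable ℝ (deriv b₁) ∧
    Differentiable ℝ (deriv (deriv b₁)) ∧
    Differentiable ℝ (deriv (deriv (deriv b₁))) ∧
    ∀ t : ℝ,
      deriv (deriv (deriv (deriv b₁))) t +
        (((N : ℂ) - 1) * γ ^ 2 + (ω : ℂ) ^ 2) * deriv (deriv b₁) t +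
        (γ : ℂ) ^ 2 * (ω : ℂ) ^ 2 * b₁ t = 0 := by
  have hI : Complex.I * Complex.I = -1 := Complex.I_mul_I
  have solve : ∀ x y : ℂ, Complex.I * x = y → x = -Complex.I * y := by
    intro x y h
    rw [← h]
    linear_combination x * hI
  have hexp : ∀ t : ℝ, HasDerivAt (fun t : ℝ => Complex.exp (Complex.I * ω * t))
      (Complex.exp (Complex.I * ω * t) * (Complex.I * ω)) t := by
    intro t
    have h := ((Complex.ofRealCLM.hasDerivAt (x := t)).const_mul (Complex.I * (ω : ℂ))).cexp
    simpa using h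
  have hexpn : ∀ t : ℝ, HasDerivAt (fun t : ℝ => Complex.exp (-(Complex.I * ω * t)))
      (Complex.exp (-(Complex.I * ω * t)) * (-(Complex.I * ω))) t := by
    intro t
    have h := ((Complex.ofRealCLM.hasDerivAt (x := t)).const_mul (Complex.I * (ω : ℂ))).neg.cexp
    simpa using h
  have hee : ∀ t : ℝ, Complex.exp (-(Complex.I * ω * t)) * Complex.exp (Complex.I * ω * t) = 1 := by
    intro t
    rw [← Complex.exp_add]
    simp
  obtain ⟨c, hc⟩ : ∃ c : ℝ → ℂ, ∀ t, c t = Complex.exp (-(Complex.I * ω * t)) * b₃ t :=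
    ⟨_, fun _ => rfl⟩
  obtain ⟨d, hd⟩ : ∃ d : ℝ → ℂ, ∀ t, d t = Complex.exp (Complex.I * ω * t) * b₄ t :=
    ⟨_, fun _ => rfl⟩
  have h1 : ∀ t, HasDerivAt b₁ (-Complex.I * (γ * b₂ t)) t := by
    intro t
    rw [← solve _ _ (heq₁ t)]
    exact (hd₁ t).hasDerivAt
  have h2 : ∀ t, HasDerivAt b₂
      (-Complex.I * (γ * b₁ t + (((N : ℂ) - 2) / 2) * γ * (c t + d t))) t := by
    intro t
    rw [hc, hd, ← solve _ _ (heq₂ t)]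
    exact (hd₂ t).hasDerivAt
  have h3 : ∀ t, HasDerivAt c (-Complex.I * ω * c t - Complex.I * γ * b₂ t) t := by
    intro t
    have h := (hexpn t).mul (hd₃ t).hasDerivAt
    rw [solve _ _ (heq₃ t)] at h
    rw [funext hc]
    refine h.congr_deriv ?_
    linear_combination (-Complex.I * γ * b₂ t) * hee t
  have h4 : ∀ t, HasDerivAt d (Complex.I * ω * d t - Complex.I * γ * b₂ t) t := by
    intro t
    have h := (hexp t).mul (hd₄ t).hasDerivAt
    rw [solve _ _ (heq₄ t)] at h
    rw [funext hd]
    refine h.congr_deriv ?_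
    linear_combination (-Complex.I * γ * b₂ t) * hee t
  have e1 : deriv b₁ = fun t => -Complex.I * (γ * b₂ t) := funext fun t => (h1 t).deriv
  have g2 : ∀ t, HasDerivAt (deriv b₁)
      (-(γ : ℂ) ^ 2 * b₁ t - (((N : ℂ) - 2) / 2) * γ ^ 2 * (c t + d t)) t := by
    intro t
    rw [e1]
    refine (((h2 t).const_mul (γ : ℂ)).const_mul (-Complex.I)).congr_deriv ?_
    linear_combination
      ((γ : ℂ) * (γ * b₁ t + (((N : ℂ) - 2) / 2) * γ * (c t + d t))) * hI
  have e2 := funext fun t => (g2 t).deriv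
  have g3 : ∀ t, HasDerivAt (deriv (deriv b₁))
      (Complex.I * γ ^ 3 * ((N : ℂ) - 1) * b₂ t
        + Complex.I * (((N : ℂ) - 2) / 2) * γ ^ 2 * ω * (c t - d t)) t := by
    intro t
    rw [e2]
    refine (((h1 t).const_mul (-(γ : ℂ) ^ 2)).sub
      (((h3 t).add (h4 t)).const_mul ((((N : ℂ) - 2) / 2) * γ ^ 2))).congr_deriv ?_
    ring
  have e3 := funext fun t => (g3 t).deriv
  have g4 : ∀ t, HasDerivAt (deriv (deriv (deriv b₁)))
      (γ ^ 3 * ((N : ℂ) - 1) * (γ * b₁ t + (((N : ℂ) - 2) / 2) * γ * (c t + d t))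
        + (((N : ℂ) - 2) / 2) * γ ^ 2 * ω ^ 2 * (c t + d t)) t := by
    intro t
    rw [e3]
    refine (((h2 t).const_mul (Complex.I * γ ^ 3 * ((N : ℂ) - 1))).add
      (((h3 t).sub (h4 t)).const_mul
        (Complex.I * (((N : ℂ) - 2) / 2) * γ ^ 2 * ω))).congr_deriv ?_
    linear_combination
      (-(γ ^ 3 * ((N : ℂ) - 1) * (γ * b₁ t + (((N : ℂ) - 2) / 2) * γ * (c t + d t))
        + (((N : ℂ) - 2) / 2) * γ ^ 2 * ω ^ 2 * (c t + d t))) * hI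
  refine ⟨fun t => (g2 t).differentiableAt, fun t => (g3 t).differentiableAt,
    fun t => (g4 t).differentiableAt, fun t => ?_⟩
  rw [(g4 t).deriv, (g2 t).deriv]
  ring
end

section
/- (Exact ground-state amplitude for Algorithm 2.) Let N ≥ 3 be an integer, γ, ω nonzero reals, and set D := ((N−1)γ² + ω²)² − 4γ²ω², Ω± := √((((N−1)γ² + ω²) ± √D)/2). For every Algorithm-2 reduced solution with initial conditions b₁(0) = 0, b₂(0) = 1, b₃(0) = 0, b₄(0) = 0, one has for all t ∈ ℝ: b₁(t) = −i·γ·[ ((Ω₊² − ω²)/(Ω₊² − Ω₋²))·sin(Ω₊ t)/Ω₊ + ((ω² − Ω₋²)/(Ω₊² − Ω₋²))·sin(Ω₋ t)/Ω₋ ]. -/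
open Complex Real

lemma osc_aux (Ω : ℝ) (hΩ : Ω ≠ 0) (w v : ℝ → ℂ)
    (hw : ∀ t, HasDerivAt w (v t) t) (hv : ∀ t, HasDerivAt v (-((Ω : ℂ) ^ 2) * w t) t)
    (h0 : w 0 = 0) (t : ℝ) :
    w t = v 0 * ((Real.sin (Ω * t) / Ω : ℝ) : ℂ) := by
  have hΩ' : (Ω : ℂ) ≠ 0 := by exact_mod_cast hΩ
  have hlin : ∀ t : ℝ, HasDerivAt (fun t : ℝ => Ω * t) Ω t := fun t => by
    simpa using (hasDerivAt_id t).const_mul Ω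
  have hs : ∀ t : ℝ, HasDerivAt (fun t : ℝ => ((Real.sin (Ω * t) : ℝ) : ℂ))
      ((Real.cos (Ω * t) * Ω : ℝ) : ℂ) t := fun t => ((hlin t).sin).ofReal_comp
  have hc : ∀ t : ℝ, HasDerivAt (fun t : ℝ => ((Real.cos (Ω * t) : ℝ) : ℂ))
      ((-Real.sin (Ω * t) * Ω : ℝ) : ℂ) t := fun t => ((hlin t).cos).ofReal_comp
  have hA : ∀ t, HasDerivAt (fun t : ℝ => (Ω : ℂ) * (w t * ((Real.cos (Ω * t) : ℝ) : ℂ))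
      - v t * ((Real.sin (Ω * t) : ℝ) : ℂ)) 0 t := fun t => by
    refine ((((hw t).mul (hc t)).const_mul (Ω : ℂ)).sub ((hv t).mul (hs t))).congr_deriv ?_
    push_cast; ring
  have hB : ∀ t, HasDerivAt (fun t : ℝ => (Ω : ℂ) * (w t * ((Real.sin (Ω * t) : ℝ) : ℂ))
      + v t * ((Real.cos (Ω * t) : ℝ) : ℂ)) 0 t := fun t => by
    refine ((((hw t).mul (hs t)).const_mul (Ω : ℂ)).add ((hv t).mul (hc t))).congr_deriv ?_
    push_cast; ring
  have eA := is_const_of_deriv_eq_zero (fun t => (hA t).differentiableAt)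
    (fun t => (hA t).deriv) t 0
  have eB := is_const_of_deriv_eq_zero (fun t => (hB t).differentiableAt)
    (fun t => (hB t).deriv) t 0
  simp only [h0, mul_zero, Real.sin_zero, Real.cos_zero, Complex.ofReal_zero, Complex.ofReal_one,
    mul_one, zero_mul, sub_zero, zero_add] at eA eB
  have hcs : ((Real.sin (Ω * t) : ℝ) : ℂ) ^ 2 + ((Real.cos (Ω * t) : ℝ) : ℂ) ^ 2 = 1 := by
    exact_mod_cast Real.sin_sq_add_cos_sq (Ω * t)
  rw [Complex.ofReal_div, ← mul_div_assoc, eq_div_iff hΩ']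
  linear_combination ((Real.cos (Ω * t) : ℝ) : ℂ) * eA + ((Real.sin (Ω * t) : ℝ) : ℂ) * eB
    - (Ω : ℂ) * w t * hcs

lemma sys_aux (γ ω p m κ : ℂ) (Ω : ℝ) (hΩ : Ω ≠ 0) (hp : (Ω : ℂ) ^ 2 = p)
    (hsum : p + m = (1 + 2 * κ) * γ ^ 2 + ω ^ 2) (hprod : p * m = γ ^ 2 * ω ^ 2)
    (b₁ b₂ c d : ℝ → ℂ)
    (h1 : ∀ t, HasDerivAt b₁ (-Complex.I * γ * b₂ t) t)
    (h2 : ∀ t, HasDerivAt b₂ (-Complex.I * (γ * b₁ t + κ * γ * (c t + d t))) t)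
    (h3 : ∀ t, HasDerivAt c (-Complex.I * (ω * c t + γ * b₂ t)) t)
    (h4 : ∀ t, HasDerivAt d (-Complex.I * (-ω * d t + γ * b₂ t)) t)
    (z1 : b₁ 0 = 0) (z2 : b₂ 0 = 1) (z3 : c 0 = 0) (z4 : d 0 = 0) (t : ℝ) :
    (m - γ ^ 2) * b₁ t - κ * γ ^ 2 * (c t + d t) =
      -Complex.I * γ * (ω ^ 2 - p) * ((Real.sin (Ω * t) / Ω : ℝ) : ℂ) := by
  have hI := Complex.I_sq
  have := osc_aux Ω hΩ (fun t => (m - γ ^ 2) * b₁ t - κ * γ ^ 2 * (c t + d t))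
    (fun t => -Complex.I * γ * (ω ^ 2 - p) * b₂ t
      + Complex.I * ω * κ * γ ^ 2 * (c t - d t)) ?_ ?_ (by simp [z1, z3, z4]) t
  · simpa [z2, z3, z4] using this
  · intro t
    refine (((h1 t).const_mul (m - γ ^ 2)).sub
      (((h3 t).add (h4 t)).const_mul (κ * γ ^ 2))).congr_deriv ?_
    linear_combination (-Complex.I * γ * b₂ t) * hsum
  · intro t
    refine (((h2 t).const_mul (-Complex.I * γ * (ω ^ 2 - p))).add
      (((h3 t).sub (h4 t)).const_mul (Complex.I * ω * κ * γ ^ 2))).congr_deriv ?_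
    rw [hp]
    linear_combination (γ ^ 2 * (ω ^ 2 - p) * (b₁ t + κ * (c t + d t))
      - ω ^ 2 * κ * γ ^ 2 * (c t + d t)) * hI + b₁ t * hprod

/-- Exact ground-state amplitude for Algorithm 2: with
`D = ((N−1)γ² + ω²)² − 4γ²ω²` and `Ω± = √((((N−1)γ² + ω²) ± √D)/2)`, every
Algorithm-2 reduced solution with `b₁(0) = 0`, `b₂(0) = 1`, `b₃(0) = 0`,
`b₄(0) = 0` satisfies
`b₁(t) = −iγ[((Ω₊² − ω²)/(Ω₊² − Ω₋²))·sin(Ω₊t)/Ω₊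
  + ((ω² − Ω₋²)/(Ω₊² − Ω₋²))·sin(Ω₋t)/Ω₋]`. -/
theorem algorithm2_exact_amplitude
    (N : ℕ) (hN : 3 ≤ N) (γ ω : ℝ) (hγ : γ ≠ 0) (hω : ω ≠ 0)
    (D Ωp Ωm : ℝ)
    (hD : D = (((N : ℝ) - 1) * γ ^ 2 + ω ^ 2) ^ 2 - 4 * γ ^ 2 * ω ^ 2)
    (hΩp : Ωp = Real.sqrt (((((N : ℝ) - 1) * γ ^ 2 + ω ^ 2) + Real.sqrt D) / 2))
    (hΩm : Ωm = Real.sqrt (((((N : ℝ) - 1) * γ ^ 2 + ω ^ 2) - Real.sqrt D) / 2))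
    (b₁ b₂ b₃ b₄ : ℝ → ℂ)
    (hd₁ : Differentiable ℝ b₁) (hd₂ : Differentiable ℝ b₂)
    (hd₃ : Differentiable ℝ b₃) (hd₄ : Differentiable ℝ b₄)
    (heq₁ : ∀ t : ℝ, Complex.I * deriv b₁ t = (γ : ℂ) * b₂ t)
    (heq₂ : ∀ t : ℝ, Complex.I * deriv b₂ t =
      (γ : ℂ) * b₁ t +
        (((N : ℂ) - 2) / 2) * γ *
          (Complex.exp (-(Complex.I * ω * t)) * b₃ t +
            Complex.exp (Complex.I * ω * t) * b₄ t))
    (heq₃ : ∀ t : ℝ, Complex.I * deriv b₃ t =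
      (γ : ℂ) * Complex.exp (Complex.I * ω * t) * b₂ t)
    (heq₄ : ∀ t : ℝ, Complex.I * deriv b₄ t =
      (γ : ℂ) * Complex.exp (-(Complex.I * ω * t)) * b₂ t)
    (hb₁0 : b₁ 0 = 0) (hb₂0 : b₂ 0 = 1) (hb₃0 : b₃ 0 = 0) (hb₄0 : b₄ 0 = 0) :
    ∀ t : ℝ,
      b₁ t = -Complex.I * (γ : ℂ) *
        ((((Ωp ^ 2 - ω ^ 2) / (Ωp ^ 2 - Ωm ^ 2)) * (Real.sin (Ωp * t) / Ωp) +
          ((ω ^ 2 - Ωm ^ 2) / (Ωp ^ 2 - Ωm ^ 2)) * (Real.sin (Ωm * t) / Ωm) : ℝ) : ℂ) := by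
  have hN' : (3 : ℝ) ≤ N := by exact_mod_cast hN
  have hγ2 : 0 < γ ^ 2 := by positivity
  have hω2 : 0 < ω ^ 2 := by positivity
  obtain ⟨S, hS⟩ : ∃ S : ℝ, S = ((N : ℝ) - 1) * γ ^ 2 + ω ^ 2 := ⟨_, rfl⟩
  rw [← hS] at hD hΩp hΩm
  have hSge : 2 * γ ^ 2 + ω ^ 2 ≤ S := by rw [hS]; nlinarith
  have hSpos : 0 < S := by linarith
  have hDpos : 0 < D := by rw [hD]; nlinarith [mul_pos hγ2 hω2, mul_pos hγ2 hγ2, mul_pos hω2 hω2]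
  have hr : 0 < Real.sqrt D := Real.sqrt_pos.2 hDpos
  have hr2 : Real.sqrt D ^ 2 = D := Real.sq_sqrt hDpos.le
  have hrS : Real.sqrt D < S := by
    rw [Real.sqrt_lt' hSpos, hD]; nlinarith [mul_pos hγ2 hω2]
  have hp0 : Ωp ≠ 0 := by rw [hΩp]; exact (Real.sqrt_pos.2 (by linarith)).ne'
  have hm0 : Ωm ≠ 0 := by rw [hΩm]; exact (Real.sqrt_pos.2 (by linarith)).ne'
  have hp2 : Ωp ^ 2 = (S + Real.sqrt D) / 2 := by rw [hΩp]; exact Real.sq_sqrt (by linarith)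
  have hm2 : Ωm ^ 2 = (S - Real.sqrt D) / 2 := by rw [hΩm]; exact Real.sq_sqrt (by linarith)
  have hdiff : Ωp ^ 2 - Ωm ^ 2 ≠ 0 := by
    rw [hp2, hm2]; intro h; linarith
  have hsumR : Ωp ^ 2 + Ωm ^ 2 = (1 + 2 * (((N : ℝ) - 2) / 2)) * γ ^ 2 + ω ^ 2 := by
    rw [hp2, hm2, hS]; ring
  have hprodR : Ωp ^ 2 * Ωm ^ 2 = γ ^ 2 * ω ^ 2 := by
    rw [hp2, hm2]; linear_combination (-1 / 4) * hr2 - (1 / 4) * hD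
  have hsum : (Ωp : ℂ) ^ 2 + (Ωm : ℂ) ^ 2
      = (1 + 2 * (((N : ℂ) - 2) / 2)) * (γ : ℂ) ^ 2 + (ω : ℂ) ^ 2 := by exact_mod_cast hsumR
  have hprod : (Ωp : ℂ) ^ 2 * (Ωm : ℂ) ^ 2 = (γ : ℂ) ^ 2 * (ω : ℂ) ^ 2 := by
    exact_mod_cast hprodR
  have hdiffC : (Ωp : ℂ) ^ 2 - (Ωm : ℂ) ^ 2 ≠ 0 := by exact_mod_cast hdiff
  have hI := Complex.I_mul_I
  have key : ∀ x y : ℂ, Complex.I * x = y → x = -Complex.I * y := by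
    intro x y h; rw [← h]; linear_combination x * hI
  have h1 : ∀ t, HasDerivAt b₁ (-Complex.I * γ * b₂ t) t := fun t =>
    (hd₁ t).hasDerivAt.congr_deriv (by rw [key _ _ (heq₁ t)]; ring)
  have h2 : ∀ t, HasDerivAt b₂ _ t := fun t =>
    (hd₂ t).hasDerivAt.congr_deriv (key _ _ (heq₂ t))
  have h3 : ∀ t, HasDerivAt b₃ _ t := fun t =>
    (hd₃ t).hasDerivAt.congr_deriv (key _ _ (heq₃ t))
  have h4 : ∀ t, HasDerivAt b₄ _ t := fun t =>
    (hd₄ t).hasDerivAt.congr_deriv (key _ _ (heq₄ t))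
  have hl : ∀ t : ℝ, HasDerivAt (fun t : ℝ => Complex.I * ω * (t : ℂ)) (Complex.I * ω) t :=
    fun t => by simpa using ((hasDerivAt_id t).ofReal_comp).const_mul (Complex.I * (ω : ℂ))
  have hee : ∀ t : ℝ, Complex.exp (-(Complex.I * ω * t)) * Complex.exp (Complex.I * ω * t) = 1 :=
    fun t => by rw [← Complex.exp_add]; simp
  have h3' : ∀ t : ℝ, HasDerivAt (fun t : ℝ => Complex.exp (-(Complex.I * ω * t)) * b₃ t)
      (-Complex.I * (ω * (Complex.exp (-(Complex.I * ω * t)) * b₃ t) + γ * b₂ t)) t := fun t => by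
    refine (((hl t).neg.cexp).mul (h3 t)).congr_deriv ?_
    simp only [Pi.neg_apply]
    linear_combination (-Complex.I * γ * b₂ t) * hee t
  have h4' : ∀ t : ℝ, HasDerivAt (fun t : ℝ => Complex.exp (Complex.I * ω * t) * b₄ t)
      (-Complex.I * (-ω * (Complex.exp (Complex.I * ω * t) * b₄ t) + γ * b₂ t)) t := fun t => by
    refine (((hl t).cexp).mul (h4 t)).congr_deriv ?_
    linear_combination (-Complex.I * γ * b₂ t) * hee t
  intro t
  have e1 := sys_aux γ ω _ ((Ωm : ℂ) ^ 2) (((N : ℂ) - 2) / 2) Ωp hp0 rfl hsum hprod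
    b₁ b₂ _ _ h1 h2 h3' h4' hb₁0 hb₂0 (by simp [hb₃0]) (by simp [hb₄0]) t
  have e2 := sys_aux γ ω _ ((Ωp : ℂ) ^ 2) (((N : ℂ) - 2) / 2) Ωm hm0 rfl
    (by rw [← hsum]; ring) (by rw [← hprod]; ring)
    b₁ b₂ _ _ h1 h2 h3' h4' hb₁0 hb₂0 (by simp [hb₃0]) (by simp [hb₄0]) t
  apply mul_left_cancel₀ hdiffC
  rw [Complex.ofReal_add, Complex.ofReal_mul, Complex.ofReal_mul _ (Real.sin (Ωm * t) / Ωm)]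
  generalize ((Real.sin (Ωp * t) / Ωp : ℝ) : ℂ) = sp at *
  generalize ((Real.sin (Ωm * t) / Ωm : ℝ) : ℂ) = sm at *
  push_cast
  have e3 : ((Ωp : ℂ) ^ 2 - (Ωm : ℂ) ^ 2) * b₁ t = -Complex.I * γ *
      (((Ωp : ℂ) ^ 2 - (ω : ℂ) ^ 2) * sp + ((ω : ℂ) ^ 2 - (Ωm : ℂ) ^ 2) * sm) := by
    linear_combination e2 - e1
  rw [e3]
  field_simp
end

section
/- (Operator norm of the Algorithm-1 perturbation.) Let N ≥ 2 be an integer, j ∈ {1,…,N}, and γ, ω, t real numbers. The N×N complex matrix V_{[j,γ,ω]}(t), viewed as a linear operator on ℂ^N with the Euclidean norm, has operator norm equal to |γ|·√(N−1). -/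
open Complex Real

/-- Operator norm of the Algorithm-1 perturbation: the `N×N` matrix
`V_{[j,γ,ω]}(t)`, viewed as an operator on `ℂ^N` with the Euclidean norm,
has operator norm `|γ|·√(N−1)`. -/
theorem algorithm1_perturbation_opNorm
    (N : ℕ) (hN : 2 ≤ N) (j : Fin N) (γ ω t : ℝ)
    (V : Matrix (Fin N) (Fin N) ℂ)
    (hV : V = fun p q =>
      if q = j ∧ p ≠ j then (γ : ℂ) * Complex.exp (Complex.I * ω * t)
      else if p = j ∧ q ≠ j then (γ : ℂ) * Complex.exp (-(Complex.I * ω * t))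
      else 0) :
    ‖Matrix.toEuclideanCLM (𝕜 := ℂ) V‖ = |γ| * Real.sqrt ((N : ℝ) - 1) := by
  have hNr : (0 : ℝ) ≤ (N : ℝ) - 1 := by
    have : (2 : ℝ) ≤ N := by exact_mod_cast hN
    linarith
  have hcard : (((Finset.univ.erase j).card : ℕ) : ℝ) = (N : ℝ) - 1 := by
    rw [Finset.card_erase_of_mem (Finset.mem_univ j), Finset.card_univ, Fintype.card_fin,
      Nat.cast_sub (by omega)]
    simp
  have ha : ‖(γ : ℂ) * Complex.exp (Complex.I * ω * t)‖ = |γ| := by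
    rw [norm_mul, Complex.norm_exp]
    simp
  have hb : ‖(γ : ℂ) * Complex.exp (-(Complex.I * ω * t))‖ = |γ| := by
    rw [norm_mul, Complex.norm_exp]
    simp
  generalize (γ : ℂ) * Complex.exp (Complex.I * ω * t) = a at *
  generalize (γ : ℂ) * Complex.exp (-(Complex.I * ω * t)) = b at *
  have hx : ∀ x : EuclideanSpace ℂ (Fin N),
      ‖x‖ ^ 2 = ‖x j‖ ^ 2 + ∑ q ∈ Finset.univ.erase j, ‖x q‖ ^ 2 := by
    intro x
    rw [EuclideanSpace.norm_sq_eq, Finset.add_sum_erase _ (fun q => ‖x q‖ ^ 2) (Finset.mem_univ j)]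
  have hap : ∀ (x : EuclideanSpace ℂ (Fin N)) (p : Fin N),
      (Matrix.toEuclideanCLM (𝕜 := ℂ) V x) p = ∑ q, V p q * x q := by
    intro x p
    rfl
  have hp : ∀ (x : EuclideanSpace ℂ (Fin N)) (p : Fin N), p ≠ j →
      (Matrix.toEuclideanCLM (𝕜 := ℂ) V x) p = a * x j := by
    intro x p hpj
    rw [hap, Finset.sum_eq_single j]
    · simp [hV, hpj]
    · intro q _ hq
      simp [hV, hpj, hq]
    · simp
  have hj : ∀ (x : EuclideanSpace ℂ (Fin N)),
      (Matrix.toEuclideanCLM (𝕜 := ℂ) V x) j = b * ∑ q ∈ Finset.univ.erase j, x q := by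
    intro x
    rw [hap, ← Finset.add_sum_erase _ _ (Finset.mem_univ j), Finset.mul_sum]
    have h0 : V j j = 0 := by simp [hV]
    rw [h0, zero_mul, zero_add]
    refine Finset.sum_congr rfl fun q hq => ?_
    have := Finset.ne_of_mem_erase hq
    simp [hV, this]
  have key : ∀ x : EuclideanSpace ℂ (Fin N), ‖Matrix.toEuclideanCLM (𝕜 := ℂ) V x‖ ^ 2 =
      γ ^ 2 * (‖∑ q ∈ Finset.univ.erase j, x q‖ ^ 2 + ((N : ℝ) - 1) * ‖x j‖ ^ 2) := by
    intro x
    have hs : ∑ q ∈ Finset.univ.erase j, ‖(Matrix.toEuclideanCLM (𝕜 := ℂ) V x) q‖ ^ 2 =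
        ∑ q ∈ Finset.univ.erase j, ‖a * x j‖ ^ 2 :=
      Finset.sum_congr rfl (fun q hq => by rw [hp x q (Finset.ne_of_mem_erase hq)])
    rw [hx, hj, hs, Finset.sum_const, nsmul_eq_mul, hcard, norm_mul, norm_mul, ha, hb, mul_pow, mul_pow, sq_abs]
    ring
  have hsq : (|γ| * Real.sqrt ((N : ℝ) - 1)) ^ 2 = γ ^ 2 * ((N : ℝ) - 1) := by
    rw [mul_pow, sq_abs, Real.sq_sqrt hNr]
  apply le_antisymm
  · refine ContinuousLinearMap.opNorm_le_bound _ (by positivity) fun x => ?_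
    refine (sq_le_sq₀ (by positivity) (by positivity)).1 ?_
    rw [key, mul_pow, hsq, hx x, mul_assoc]
    refine mul_le_mul_of_nonneg_left ?_ (sq_nonneg γ)
    have h1 : ‖∑ q ∈ Finset.univ.erase j, x q‖ ^ 2 ≤
        ((N : ℝ) - 1) * ∑ q ∈ Finset.univ.erase j, ‖x q‖ ^ 2 := by
      rw [← hcard]
      exact (pow_le_pow_left₀ (norm_nonneg _) (norm_sum_le _ _) 2).trans sq_sum_le_card_mul_sum_sq
    linarith
  · have h := (Matrix.toEuclideanCLM (𝕜 := ℂ) V).le_opNorm (EuclideanSpace.single j (1 : ℂ))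
    rw [EuclideanSpace.norm_single, norm_one, mul_one] at h
    refine le_trans ((sq_le_sq₀ (by positivity) (by positivity)).1 ?_) h
    rw [key, hsq]
    refine mul_le_mul_of_nonneg_left ?_ (sq_nonneg γ)
    simp
end

section
/- (From the vanishing coefficients to Equation (mmf).) Let m ≥ 1 be a natural number and α, ω : {1,…,m} → ℝ with ω_j ≠ 0 for all j. If S₁ = 0 and S₂ = 0, then Σ_{j=1}^{m} α_j · ∏_{k ≠ j} ω_k² = 0. -/
open Finset

/-- From the vanishing coefficients to Equation (mmf): if
`S₁ = Σ_j α_j·∏_{k≠j} ω_k = 0` and `S₂ = Σ_j α_j·Σ_{k≠j} ∏_{l≠j,k} ω_l = 0`,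
then `Σ_j α_j·∏_{k≠j} ω_k² = 0`. -/
theorem vanishing_coefficients_to_mmf
    (m : ℕ) (hm : 1 ≤ m) (α ω : Fin m → ℝ) (hω : ∀ j, ω j ≠ 0)
    (hS₁ : ∑ j : Fin m, α j * ∏ k ∈ Finset.univ.erase j, ω k = 0)
    (hS₂ : ∑ j : Fin m, α j *
      ∑ k ∈ Finset.univ.erase j, ∏ l ∈ (Finset.univ.erase j).erase k, ω l = 0) :
    ∑ j : Fin m, α j * ∏ k ∈ Finset.univ.erase j, (ω k) ^ 2 = 0 := by
  have h1 : ∀ j, ∏ k ∈ Finset.univ.erase j, ω k = (∏ k, ω k) * (ω j)⁻¹ := by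
    intro j
    rw [← Finset.mul_prod_erase Finset.univ ω (Finset.mem_univ j)]
    have := hω j
    field_simp
  have h2 : ∀ j, ∑ k ∈ Finset.univ.erase j, ∏ l ∈ (Finset.univ.erase j).erase k, ω l
      = (∏ k, ω k) * (ω j)⁻¹ * (∑ k, (ω k)⁻¹ - (ω j)⁻¹) := by
    intro j
    rw [← Finset.add_sum_erase Finset.univ (fun k => (ω k)⁻¹) (Finset.mem_univ j),
      add_sub_cancel_left, Finset.mul_sum, ← h1 j]
    refine Finset.sum_congr rfl fun k hk => ?_
    rw [← Finset.mul_prod_erase (Finset.univ.erase j) ω hk]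
    have := hω k
    field_simp
  have key : ∑ j : Fin m, α j * ∏ k ∈ Finset.univ.erase j, (ω k) ^ 2
      = (∏ k, ω k) * ((∑ k, (ω k)⁻¹) * (∑ j : Fin m, α j * ∏ k ∈ Finset.univ.erase j, ω k)
        - ∑ j : Fin m, α j *
      ∑ k ∈ Finset.univ.erase j, ∏ l ∈ (Finset.univ.erase j).erase k, ω l) := by
    rw [Finset.mul_sum (Finset.univ) _ (∑ k, (ω k)⁻¹), ← Finset.sum_sub_distrib, Finset.mul_sum]
    refine Finset.sum_congr rfl fun j _ => ?_
    rw [Finset.prod_pow, h1, h2]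
    ring
  rw [key, hS₁, hS₂]
  simp
end

section
/- (Algebraic core of Theorem 1: optimality of Algorithm 2.) Let m ≥ 1 be a natural number and α, ω : {1,…,m} → ℝ with α_j > 0 and ω_j ≠ 0 for all j. Then it is impossible that both S₁ = 0 and S₂ = 0. (Consequently, in the optimality analysis, the coefficients of s and s² in the numerator of Λ cannot both vanish, so the exponent gap d in ω_R satisfies d ≤ 2; since Algorithm 2 achieves d = 2, it is optimal.) -/
open Finset

/-- Algebraic core of Theorem 1 (optimality of Algorithm 2): if every `α_j > 0`
and every `ω_j ≠ 0`, then `S₁ = Σ_j α_j·∏_{k≠j} ω_k` and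
`S₂ = Σ_j α_j·Σ_{k≠j} ∏_{l≠j,k} ω_l` cannot both vanish. -/
theorem algorithm2_optimality_core
    (m : ℕ) (hm : 1 ≤ m) (α ω : Fin m → ℝ)
    (hα : ∀ j, 0 < α j) (hω : ∀ j, ω j ≠ 0) :
    ¬ ((∑ j : Fin m, α j * ∏ k ∈ Finset.univ.erase j, ω k = 0) ∧
       (∑ j : Fin m, α j *
         ∑ k ∈ Finset.univ.erase j,
           ∏ l ∈ (Finset.univ.erase j).erase k, ω l = 0)) := by
  rintro ⟨h1, h2⟩
  set P : ℝ := ∏ l, ω l with hP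
  have hP0 : P ≠ 0 := Finset.prod_ne_zero_iff.mpr fun i _ => hω i
  have e1 : ∀ j, ∏ k ∈ Finset.univ.erase j, ω k = P * (ω j)⁻¹ := by
    intro j
    rw [eq_mul_inv_iff_mul_eq₀ (hω j)]
    exact Finset.prod_erase_mul _ _ (Finset.mem_univ j)
  have e2 : ∀ j, ∑ k ∈ Finset.univ.erase j, ∏ l ∈ (Finset.univ.erase j).erase k, ω l
      = P * (ω j)⁻¹ * ((∑ k, (ω k)⁻¹) - (ω j)⁻¹) := by
    intro j
    rw [← Finset.sum_erase_eq_sub (Finset.mem_univ j), Finset.mul_sum]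
    refine Finset.sum_congr rfl fun k hk => ?_
    rw [eq_mul_inv_iff_mul_eq₀ (hω k), ← e1 j]
    exact Finset.prod_erase_mul _ _ hk
  simp only [e1] at h1
  simp only [e2] at h2
  have h3 : P * ∑ j, α j * ((ω j)⁻¹) ^ 2 = 0 := by
    have : P * ∑ j, α j * ((ω j)⁻¹) ^ 2 =
        (∑ k, (ω k)⁻¹) * (∑ j, α j * (P * (ω j)⁻¹)) -
        ∑ j, α j * (P * (ω j)⁻¹ * ((∑ k, (ω k)⁻¹) - (ω j)⁻¹)) := by
      rw [Finset.mul_sum, Finset.mul_sum, ← Finset.sum_sub_distrib]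
      exact Finset.sum_congr rfl fun j _ => by ring
    rw [this, h1, h2]; ring
  have h4 : 0 < ∑ j, α j * ((ω j)⁻¹) ^ 2 := by
    refine Finset.sum_pos (fun j _ => ?_) ⟨⟨0, hm⟩, Finset.mem_univ _⟩
    have := inv_ne_zero (hω j)
    have := hα j
    positivity
  exact (mul_ne_zero hP0 h4.ne') h3
end
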